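/- arXiv:1409.8402 — 10 statements merged into one kernel-verified Lean document; each statement's English description precedes it below -/
import Mathlib

section
/- Let θ_i, θ_j > 0 and D > 0, and define f(x) = θ_j(2^x − 1) + θ_i(2^{D−x} − 1) for x ∈ [0, D]. Set L = log₂(θ_i/θ_j). Then f attains its minimum over the interval [0, D] at the point x̂ given by: x̂ = 0 if L < −D; x̂ = (D + L)/2 if −D ≤ L < D; and x̂ = D if L ≥ D. -/
/-!
Since `θi = θj * 2 ^ L`, the cost is, up to an additive constant, `θj * (2 ^ x + 2 ^ (c - x))` with
`c = L + D`. The bracket satisfies the factorization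
`(2 ^ x + 2 ^ (c - x)) - (2 ^ a + 2 ^ (c - a)) = (2 ^ x - 2 ^ a) * (1 - 2 ^ (c - x - a))`,
so `a` is at least as good as `x` as soon as `x - a` and `x + a - c` have the same sign. This sign
condition holds for every `x ∈ [0, D]` in each of the three threshold regimes, so no calculus is
needed.
-/

/-- The two factors of the difference of the two sides have the same sign under `h`. -/
lemma two_rpow_add_le {x a c : ℝ} (h : (a ≤ x ∧ c ≤ x + a) ∨ (x ≤ a ∧ x + a ≤ c)) :
    (2:ℝ) ^ a + (2:ℝ) ^ (c - a) ≤ (2:ℝ) ^ x + (2:ℝ) ^ (c - x) := by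
  have h1 : (2:ℝ) ^ (c - a) = 2 ^ x * 2 ^ (c - x - a) := by
    rw [← Real.rpow_add two_pos]; ring_nf
  have h2 : (2:ℝ) ^ (c - x) = 2 ^ a * 2 ^ (c - x - a) := by
    rw [← Real.rpow_add two_pos]; ring_nf
  have key : 0 ≤ ((2:ℝ) ^ x - 2 ^ a) * (1 - 2 ^ (c - x - a)) := by
    rcases h with ⟨hax, hc⟩ | ⟨hxa, hc⟩
    · exact mul_nonneg
        (sub_nonneg.2 (Real.rpow_le_rpow_of_exponent_le one_le_two hax))
        (sub_nonneg.2 (Real.rpow_le_one_of_one_le_of_nonpos one_le_two (by linarith)))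
    · exact mul_nonneg_of_nonpos_of_nonpos
        (sub_nonpos.2 (Real.rpow_le_rpow_of_exponent_le one_le_two hxa))
        (sub_nonpos.2 (Real.one_le_rpow one_le_two (by linarith)))
  rw [h1, h2]
  linarith

/-- Proposition 3.1: the weighted-sum energy cost
`f(x) = θⱼ(2^x − 1) + θᵢ(2^{D−x} − 1)` attains its minimum over `[0, D]` at the
threshold point `x̂` determined by `L = log₂(θᵢ/θⱼ)`. -/
theorem min_of_weighted_energy_cost
    (θi θj D : ℝ) (hθi : 0 < θi) (hθj : 0 < θj) (hD : 0 < D)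
    (f : ℝ → ℝ)
    (hf : ∀ x : ℝ, f x = θj * ((2:ℝ) ^ x - 1) + θi * ((2:ℝ) ^ (D - x) - 1))
    (L : ℝ) (hL : L = Real.logb 2 (θi / θj))
    (xhat : ℝ)
    (hxhat : xhat = if L < -D then 0 else if L < D then (D + L) / 2 else D) :
    xhat ∈ Set.Icc 0 D ∧ IsMinOn f (Set.Icc 0 D) xhat := by
  have hθ : θi = θj * (2:ℝ) ^ L := by
    rw [hL, Real.rpow_logb two_pos (by norm_num) (div_pos hθi hθj)]
    field_simp
  have hcost : ∀ y, f y = θj * ((2:ℝ) ^ y + 2 ^ (L + D - y)) - θj - θi := by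
    intro y
    have : (2:ℝ) ^ (L + D - y) = 2 ^ L * 2 ^ (D - y) := by
      rw [← Real.rpow_add two_pos]; ring_nf
    rw [hf, this, hθ]
    ring
  have hmem : xhat ∈ Set.Icc 0 D := by
    rw [hxhat, Set.mem_Icc]
    split_ifs <;> constructor <;> linarith
  refine ⟨hmem, isMinOn_iff.2 fun x hx => ?_⟩
  obtain ⟨hx0, hxD⟩ := hx
  have hsign : (xhat ≤ x ∧ L + D ≤ x + xhat) ∨ (x ≤ xhat ∧ x + xhat ≤ L + D) := by
    rw [hxhat]
    split_ifs with h1 h2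
    · left; constructor <;> linarith
    -- In the middle regime `2 * xhat = L + D`, so both inequalities just compare `x` with `xhat`.
    · rcases le_total ((D + L) / 2) x with h | h
      · left; constructor <;> linarith
      · right; constructor <;> linarith
    · right; constructor <;> linarith
  rw [hcost, hcost]
  have := mul_le_mul_of_nonneg_left (two_rpow_add_le hsign) hθj.le
  linarith
end

section
/- Let θ_i, θ_j > 0 and D > 0, and suppose log₂(θ_i/θ_j) ≤ −D. Then the function f(x) = θ_j(2^x − 1) + θ_i(2^{D−x} − 1) is strictly increasing on [0, D]; in particular its minimum over [0, D] is attained at x = 0. -/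
/-!
The hypothesis says `θi * 2 ^ D ≤ θj`. For `0 ≤ x < y`, put `a = 2 ^ x` and `b = 2 ^ y`, so that
`1 ≤ a < b` and `f y - f x = (b - a) * (θj - θi * 2 ^ D / (a * b))`. Since `a * b > 1`, the second
factor is positive.
-/

/-- First case in the proof of Proposition 3.1: if `log₂(θᵢ/θⱼ) ≤ −D`, then
`f(x) = θⱼ(2^x − 1) + θᵢ(2^{D−x} − 1)` is strictly increasing on `[0, D]`, so its
minimum over `[0, D]` is attained at `x = 0`. -/
theorem strictMonoOn_energy_cost_of_log_ratio_le
    (θi θj D : ℝ) (hθi : 0 < θi) (hθj : 0 < θj) (hD : 0 < D)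
    (h : Real.logb 2 (θi / θj) ≤ -D)
    (f : ℝ → ℝ)
    (hf : ∀ x : ℝ, f x = θj * ((2:ℝ) ^ x - 1) + θi * ((2:ℝ) ^ (D - x) - 1)) :
    StrictMonoOn f (Set.Icc 0 D) ∧ IsMinOn f (Set.Icc 0 D) 0 := by
  have hK : θi * (2:ℝ) ^ D ≤ θj := by
    rw [Real.logb_le_iff_le_rpow one_lt_two (div_pos hθi hθj), Real.rpow_neg zero_le_two,
      div_le_iff₀ hθj, inv_mul_eq_div, le_div_iff₀ (Real.rpow_pos_of_pos two_pos D)] at h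
    exact h
  have hmono : StrictMonoOn f (Set.Icc 0 D) := by
    intro x hx y _ hxy
    have ha : 1 ≤ (2:ℝ) ^ x := Real.one_le_rpow one_le_two hx.1
    have hab : (2:ℝ) ^ x < (2:ℝ) ^ y := Real.rpow_lt_rpow_of_exponent_lt one_lt_two hxy
    rw [hf, hf, Real.rpow_sub two_pos, Real.rpow_sub two_pos]
    generalize (2:ℝ) ^ x = a at *
    generalize (2:ℝ) ^ y = b at *
    generalize (2:ℝ) ^ D = K at *
    have ha0 : 0 < a := by linarith
    have hb0 : 0 < b := by linarith
    have hprod : 1 < a * b := by nlinarith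
    have hfac : 0 < θj - θi * K / (a * b) := by
      rw [sub_pos, div_lt_iff₀ (by positivity)]
      nlinarith
    have hdiff : θj * (b - 1) + θi * (K / b - 1) - (θj * (a - 1) + θi * (K / a - 1))
        = (b - a) * (θj - θi * K / (a * b)) := by
      field_simp
      ring
    rw [← sub_pos, hdiff]
    exact mul_pos (sub_pos.2 hab) hfac
  exact ⟨hmono, fun x hx => hmono.monotoneOn (Set.left_mem_Icc.2 hD.le) hx hx.1⟩
end

section
/- Let θ_i, θ_j > 0 and D > 0, and suppose log₂(θ_i/θ_j) ≥ D. Then the function f(x) = θ_j(2^x − 1) + θ_i(2^{D−x} − 1) is strictly decreasing on [0, D]; in particular its minimum over [0, D] is attained at x = D. -/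
/-!
For `x < y ≤ D` put `a = 2^x`, `b = 2^y`, `u = 2^(D-x)`, `v = 2^(D-y)`. Since `a u = b v = 2^D`,
we have `a (u - v) = (b - a) v`, so `f y < f x`, i.e. `θj (b - a) < θi (u - v)`, reduces to
`θj a < θi v`. This holds because `θj a < θj 2^D ≤ θi ≤ θi v`, the middle inequality being the
hypothesis on the logarithm.
-/

/-- Third case in the proof of Proposition 3.1: if `log₂(θᵢ/θⱼ) ≥ D`, then
`f(x) = θⱼ(2^x − 1) + θᵢ(2^{D−x} − 1)` is strictly decreasing on `[0, D]`, so its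
minimum over `[0, D]` is attained at `x = D`. -/
theorem strictAntiOn_energy_cost_of_log_ratio_ge
    (θi θj D : ℝ) (hθi : 0 < θi) (hθj : 0 < θj) (hD : 0 < D)
    (h : D ≤ Real.logb 2 (θi / θj))
    (f : ℝ → ℝ)
    (hf : ∀ x : ℝ, f x = θj * ((2:ℝ) ^ x - 1) + θi * ((2:ℝ) ^ (D - x) - 1)) :
    StrictAntiOn f (Set.Icc 0 D) ∧ IsMinOn f (Set.Icc 0 D) D := by
  have hE : θj * (2:ℝ) ^ D ≤ θi := by
    rw [Real.le_logb_iff_rpow_le one_lt_two (div_pos hθi hθj), le_div_iff₀ hθj] at h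
    linarith
  have hanti : StrictAntiOn f (Set.Icc 0 D) := by
    intro x _ y hy hxy
    rw [hf, hf]
    have ha : (0:ℝ) < 2 ^ x := by positivity
    have hab : (2:ℝ) ^ x < 2 ^ y := Real.rpow_lt_rpow_of_exponent_lt one_lt_two hxy
    have hbE : (2:ℝ) ^ y ≤ 2 ^ D := Real.rpow_le_rpow_of_exponent_le one_le_two hy.2
    have hv : (1:ℝ) ≤ 2 ^ (D - y) := Real.one_le_rpow one_le_two (sub_nonneg.2 hy.2)
    have hau : (2:ℝ) ^ x * 2 ^ (D - x) = 2 ^ y * 2 ^ (D - y) := by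
      rw [← Real.rpow_add two_pos, ← Real.rpow_add two_pos]
      congr 1
      ring
    generalize (2:ℝ) ^ x = a at *
    generalize (2:ℝ) ^ y = b at *
    generalize (2:ℝ) ^ (D - x) = u at *
    generalize (2:ℝ) ^ (D - y) = v at *
    have hkey : θj * a < θi * v := calc
      θj * a < θj * b := mul_lt_mul_of_pos_left hab hθj
      _ ≤ θj * 2 ^ D := mul_le_mul_of_nonneg_left hbE hθj.le
      _ ≤ θi := hE
      _ ≤ θi * v := le_mul_of_one_le_right hθi.le hv
    have hmul : a * (θj * (b - a)) < a * (θi * (u - v)) := calc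
      a * (θj * (b - a)) = (θj * a) * (b - a) := by ring
      _ < (θi * v) * (b - a) := mul_lt_mul_of_pos_right hkey (sub_pos.2 hab)
      _ = a * (θi * (u - v)) := by linear_combination -θi * hau
    have := lt_of_mul_lt_mul_left hmul ha.le
    linarith
  exact ⟨hanti, fun x hx => hanti.antitoneOn hx ⟨hD.le, le_rfl⟩ hx.2⟩
end

section
/- For every a > 0, the function φ_a(w) = w(1 − e^{−a/w}) is strictly increasing on (0, ∞). -/
/-- For every `a > 0`, the acceptance function `φₐ(w) = w(1 − e^{−a/w})` is
strictly increasing on `(0, ∞)`. -/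
theorem strictMonoOn_acceptance_function (a : ℝ) (ha : 0 < a) :
    StrictMonoOn (fun w : ℝ => w * (1 - Real.exp (-a / w))) (Set.Ioi 0) := by
  intro x hx y hy hxy
  have hx : 0 < x := hx
  have hy : 0 < y := hy
  have hne : -a / x ≠ 0 := div_ne_zero (neg_ne_zero.mpr ha.ne') hx.ne'
  -- Strict convexity of `exp` at `-a/y = (x/y) * (-a/x) + (1 - x/y) * 0`;
  -- multiplying the resulting inequality by `y` gives the claim.
  have h := strictConvexOn_exp.2 (Set.mem_univ (-a / x)) (Set.mem_univ 0) hne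
    (div_pos hx hy) (sub_pos.mpr ((div_lt_one hy).mpr hxy)) (add_sub_cancel (x / y) 1)
  have harg : x / y * (-a / x) = -a / y := by field_simp
  simp only [smul_eq_mul, mul_zero, add_zero, Real.exp_zero, mul_one, harg] at h
  have h' := mul_lt_mul_of_pos_left h hy
  have hmul : y * (x / y * Real.exp (-a / x) + (1 - x / y))
      = x * Real.exp (-a / x) + (y - x) := by field_simp
  rw [hmul] at h'
  show x * (1 - Real.exp (-a / x)) < y * (1 - Real.exp (-a / y))
  linarith
end

section
/- Let a > 0, c > 0 and ε ∈ ℝ, and define ψ(π) = 1 − (c(π−ε)/a)(1 − e^{−a/(c(π−ε))}) for π > ε. Then ψ is convex on (ε, ∞), strictly decreasing on (ε, ∞), and satisfies 0 < ψ(π) < 1 for every π > ε. -/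
/-!
With `t = c (p - ε) / a`, an increasing affine function of `p`, the function becomes
`ψ = 1 - t + t e^{-1/t}`. The term `t e^{-1/t}` is a perspective of `exp`: multiplying the tangent
inequality `e^u ≥ e^v (1 + u - v)` at `u = -1/t`, `v = -1/s` by `t` gives the supporting line
`t e^{-1/t} ≥ e^{-1/s} (t (1 + 1/s) - 1)`, with equality at `t = s` (`perspExp_tangent`).
Convexity follows by averaging this bound. The slope `e^{-1/s} (1 + 1/s)` is less than `1`, so
`t - t e^{-1/t}` is strictly increasing. The bounds reduce to `1 - 1/t < e^{-1/t} < 1`.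
-/

/-- The perspective `t ↦ t e^{-1/t}` of the exponential. -/
noncomputable def perspExp (t : ℝ) : ℝ := t * Real.exp (-t⁻¹)

/-- For `s > 0` the left side is the tangent line of `perspExp` at `s`; the bound itself needs no
condition on `s`. -/
lemma perspExp_tangent {s t : ℝ} (ht : 0 < t) :
    Real.exp (-s⁻¹) * (t * (1 + s⁻¹) - 1) ≤ perspExp t := by
  have h1 : -t⁻¹ + s⁻¹ + 1 ≤ Real.exp (-t⁻¹ + s⁻¹) := Real.add_one_le_exp _
  have h2 : Real.exp (-t⁻¹) = Real.exp (-s⁻¹) * Real.exp (-t⁻¹ + s⁻¹) := by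
    rw [← Real.exp_add]; congr 1; ring
  have h3 : t * (1 + s⁻¹) - 1 = t * (-t⁻¹ + s⁻¹ + 1) := by
    field_simp
    ring
  rw [perspExp, h2, h3, mul_left_comm]
  gcongr

lemma perspExp_convexOn : ConvexOn ℝ (Set.Ioi 0) perspExp := by
  refine ⟨convex_Ioi 0, fun x hx y hy α β hα hβ hαβ => ?_⟩
  have hs : 0 < α • x + β • y := (convex_Ioi (0 : ℝ)) hx hy hα hβ hαβ
  simp only [smul_eq_mul] at hs ⊢
  set s := α * x + β * y with hs_def
  have h1 := mul_le_mul_of_nonneg_left (perspExp_tangent (s := s) hx) hα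
  have h2 := mul_le_mul_of_nonneg_left (perspExp_tangent (s := s) hy) hβ
  have h3 : s * s⁻¹ = 1 := mul_inv_cancel₀ hs.ne'
  have h4 : perspExp s = α * (Real.exp (-s⁻¹) * (x * (1 + s⁻¹) - 1)) +
      β * (Real.exp (-s⁻¹) * (y * (1 + s⁻¹) - 1)) := by
    rw [perspExp]
    linear_combination (-Real.exp (-s⁻¹)) * h3 + Real.exp (-s⁻¹) * hαβ
      + Real.exp (-s⁻¹) * (1 + s⁻¹) * hs_def
  linarith

lemma perspExp_sub_lt {s t : ℝ} (hs : 0 < s) (hst : s < t) :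
    perspExp t - perspExp s < t - s := by
  have ht := hs.trans hst
  have h1 := perspExp_tangent (s := t) hs
  have h3 : t * t⁻¹ = 1 := mul_inv_cancel₀ ht.ne'
  have h4 : Real.exp (-t⁻¹) * (1 + t⁻¹) < 1 := by
    have h5 := Real.add_one_lt_exp (inv_pos.2 ht).ne'
    have h6 : Real.exp (-t⁻¹) * Real.exp t⁻¹ = 1 := by rw [← Real.exp_add]; simp
    rw [← h6]
    gcongr
    linarith
  have h7 := mul_lt_mul_of_pos_left h4 (sub_pos.2 hst)
  have h8 : perspExp t - Real.exp (-t⁻¹) * (s * (1 + t⁻¹) - 1) =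
      (t - s) * (Real.exp (-t⁻¹) * (1 + t⁻¹)) := by
    rw [perspExp]
    linear_combination (-Real.exp (-t⁻¹)) * h3
  linarith

/-- Appendix B: the rejection probability
`ψ(p) = 1 − (c(p−ε)/a)(1 − e^{−a/(c(p−ε))})` is convex on `(ε, ∞)`, strictly
decreasing on `(ε, ∞)`, and satisfies `0 < ψ(p) < 1` for every `p > ε`. -/
theorem rejection_probability_convex_antitone_bounds
    (a c ε : ℝ) (ha : 0 < a) (hc : 0 < c)
    (ψ : ℝ → ℝ)
    (hψ : ∀ p : ℝ, ψ p =
      1 - (c * (p - ε) / a) * (1 - Real.exp (-a / (c * (p - ε))))) :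
    ConvexOn ℝ (Set.Ioi ε) ψ ∧ StrictAntiOn ψ (Set.Ioi ε) ∧
    ∀ p ∈ Set.Ioi ε, 0 < ψ p ∧ ψ p < 1 := by
  have hpos : ∀ p ∈ Set.Ioi ε, 0 < c * (p - ε) / a := fun p hp =>
    div_pos (mul_pos hc (sub_pos.2 hp)) ha
  have hψ' : ∀ p, ψ p = 1 - c * (p - ε) / a + perspExp (c * (p - ε) / a) := by
    intro p
    rw [hψ, perspExp, inv_div, neg_div]
    ring
  refine ⟨⟨convex_Ioi ε, fun x hx y hy α β hα hβ hαβ => ?_⟩, fun x hx y hy hxy => ?_,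
    fun p hp => ?_⟩
  · have h := perspExp_convexOn.2 (hpos x hx) (hpos y hy) hα hβ hαβ
    have he : c * (α * x + β * y - ε) / a =
        α * (c * (x - ε) / a) + β * (c * (y - ε) / a) := by
      linear_combination (c * ε / a) * hαβ
    simp only [smul_eq_mul] at h ⊢
    rw [hψ', hψ', hψ', he]
    linarith
  · have h := perspExp_sub_lt (s := c * (x - ε) / a) (t := c * (y - ε) / a) (hpos x hx)
      (by gcongr)
    rw [hψ', hψ']
    linarith
  · have ht := hpos p hp
    rw [hψ', perspExp]
    generalize c * (p - ε) / a = t at ht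
    have hi : 0 < t⁻¹ := inv_pos.2 ht
    have h1 := mul_lt_mul_of_pos_left (Real.add_one_lt_exp (neg_ne_zero.2 hi.ne')) ht
    have h2 := mul_lt_mul_of_pos_left (Real.exp_lt_one_iff.2 (neg_neg_of_pos hi)) ht
    have h3 : t * t⁻¹ = 1 := mul_inv_cancel₀ ht.ne'
    constructor <;> linarith
end

section
/- Let a > 0, c > 0 and ε ∈ ℝ, and define ψ(π) = 1 − (c(π−ε)/a)(1 − e^{−a/(c(π−ε))}) for π > ε. Then for every natural number n, the function π ↦ ψ(π)^n is convex on (ε, ∞). -/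
/-!
With `u = c (p - ε) / a` one has `ψ p = 1 - u + u * exp (-1 / u)`. The map `u ↦ u * exp (-1 / u)` is
the perspective of `exp` restricted to the line of points `(-1, u)`, hence convex on `(0, ∞)`
(`convexOn_mul_exp_neg_inv`), so `ψ` is convex as an affine function plus an affine reparametrisation
of a convex one. Since `1 - 1 / u ≤ exp (-1 / u)`, `ψ` is also nonnegative, and powers of nonnegative
convex functions are convex.
-/

/-- Tangent-line bound for `u ↦ u * exp (-1 / u)` at `w`: the inequality `1 + x ≤ exp x` at
`x = 1 / w - 1 / u`, multiplied by `u * exp (-1 / w)`. -/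
lemma tangent_le_mul_exp_neg_inv {u : ℝ} (w : ℝ) (hu : 0 < u) :
    Real.exp (-w⁻¹) * (u - 1 + u * w⁻¹) ≤ u * Real.exp (-u⁻¹) := by
  have h := Real.add_one_le_exp (w⁻¹ - u⁻¹)
  have hsplit : Real.exp (-u⁻¹) = Real.exp (-w⁻¹) * Real.exp (w⁻¹ - u⁻¹) := by
    rw [← Real.exp_add]
    congr 1
    ring
  calc Real.exp (-w⁻¹) * (u - 1 + u * w⁻¹)
      = u * (Real.exp (-w⁻¹) * (w⁻¹ - u⁻¹ + 1)) := by
        field_simp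
        ring
    _ ≤ u * Real.exp (-u⁻¹) := by
        rw [hsplit]
        gcongr

lemma convexOn_mul_exp_neg_inv :
    ConvexOn ℝ (Set.Ioi 0) (fun u : ℝ => u * Real.exp (-u⁻¹)) := by
  refine ⟨convex_Ioi 0, ?_⟩
  intro u hu v hv s t hs ht hst
  have hw : 0 < s • u + t • v := (convex_Ioi (0 : ℝ)) hu hv hs ht hst
  simp only [smul_eq_mul] at hw ⊢
  set w := s * u + t * v with hwdef
  have h1 := mul_le_mul_of_nonneg_left (tangent_le_mul_exp_neg_inv w hu) hs
  have h2 := mul_le_mul_of_nonneg_left (tangent_le_mul_exp_neg_inv w hv) ht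
  -- The tangent line at `w`, averaged over `u` and `v`, takes its value at `w` itself.
  have h3 : s * (Real.exp (-w⁻¹) * (u - 1 + u * w⁻¹)) + t * (Real.exp (-w⁻¹) * (v - 1 + v * w⁻¹))
      = w * Real.exp (-w⁻¹) := by
    have hww : (s * u + t * v) * w⁻¹ = 1 := mul_inv_cancel₀ hw.ne'
    linear_combination Real.exp (-w⁻¹) * hww - Real.exp (-w⁻¹) * hst - Real.exp (-w⁻¹) * hwdef
  linarith

/-- Appendix B: for every `n : ℕ`, the probability `ψ(p)ⁿ` that all `n` helping
MTs reject the offered price `p` is convex on `(ε, ∞)`. -/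
theorem rejection_probability_pow_convex
    (a c ε : ℝ) (ha : 0 < a) (hc : 0 < c)
    (ψ : ℝ → ℝ)
    (hψ : ∀ p : ℝ, ψ p =
      1 - (c * (p - ε) / a) * (1 - Real.exp (-a / (c * (p - ε))))) :
    ∀ n : ℕ, ConvexOn ℝ (Set.Ioi ε) (fun p : ℝ => ψ p ^ n) := by
  have hpos : ∀ p ∈ Set.Ioi ε, 0 < c * (p - ε) / a := fun p hp =>
    div_pos (mul_pos hc (sub_pos.2 hp)) ha
  have hform : ∀ p, ψ p = 1 - c * (p - ε) / a
      + c * (p - ε) / a * Real.exp (-(c * (p - ε) / a)⁻¹) := by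
    intro p
    rw [hψ, inv_div, neg_div]
    ring
  have hconv : ConvexOn ℝ (Set.Ioi ε) ψ := by
    refine ⟨convex_Ioi ε, ?_⟩
    intro x hx y hy s t hs ht hst
    have h := convexOn_mul_exp_neg_inv.2 (hpos x hx) (hpos y hy) hs ht hst
    have haff : c * (s * x + t * y - ε) / a = s * (c * (x - ε) / a) + t * (c * (y - ε) / a) := by
      linear_combination c * ε / a * hst
    simp only [smul_eq_mul] at h ⊢
    rw [hform, hform x, hform y, haff]
    linarith
  have hnonneg : ∀ ⦃p⦄, p ∈ Set.Ioi ε → 0 ≤ ψ p := by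
    intro p hp
    have hu := hpos p hp
    rw [hform]
    set u := c * (p - ε) / a
    have h := mul_le_mul_of_nonneg_left (Real.add_one_le_exp (-u⁻¹)) hu.le
    have hinv : u * u⁻¹ = 1 := mul_inv_cancel₀ hu.ne'
    linarith
  exact fun n => hconv.pow hnonneg n
end

section
/- Let a > 0, c > 0 and ε ∈ ℝ, and define ψ(π) = 1 − (c(π−ε)/a)(1 − e^{−a/(c(π−ε))}) for π > ε. Then for every natural number n, the function ψ_I(π) = 1 − ψ(π)^n is concave and nondecreasing on (ε, ∞). -/
/-!
With `t = c (p - ε) / a > 0` one has `ψ p = g t` where `g t = 1 - t (1 - e^{-1/t})`. Multiplying the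
tangent-line inequality `e^{-1/t} ≥ e^{-s} (1 + s - 1/t)` by `t` exhibits `g` as a supremum of affine
functions of slope `(1 + s) e^{-s} - 1 ≤ 0`, attained at `s = 1/t` (`profile_support`). Hence `g`
is convex and antitone; it is also nonnegative, so its powers are convex and antitone as well.
-/

/-- The acceptance-failure profile `ψ` in the normalized variable `t = c (p - ε) / a`. -/
noncomputable def profile (t : ℝ) : ℝ := 1 - t * (1 - Real.exp (-(1 / t)))

lemma profile_nonneg {t : ℝ} (ht : 0 < t) : 0 ≤ profile t := by
  have h := Real.add_one_le_exp (-(1 / t))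
  have h2 : t * (1 / t) = 1 := by field_simp
  unfold profile
  nlinarith

/-- The graph of `profile` lies above a supporting line of nonpositive slope at every `z > 0`. -/
lemma profile_support {z : ℝ} (hz : 0 < z) :
    ∃ m ≤ 0, ∀ x, 0 < x → profile z + m * (x - z) ≤ profile x := by
  refine ⟨(1 + 1 / z) * Real.exp (-(1 / z)) - 1, ?_, fun x hx => ?_⟩
  · have h := mul_le_mul_of_nonneg_right (Real.add_one_le_exp (1 / z))
      (Real.exp_pos (-(1 / z))).le
    rw [← Real.exp_add, add_neg_cancel, Real.exp_zero] at h
    linarith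
  · have h := mul_le_mul_of_nonneg_left (Real.add_one_le_exp (1 / z - 1 / x))
      (Real.exp_pos (-(1 / z))).le
    rw [← Real.exp_add, show -(1 / z) + (1 / z - 1 / x) = -(1 / x) by ring] at h
    have h' := mul_le_mul_of_nonneg_left h hx.le
    have hx1 : x * (1 / x) = 1 := by field_simp
    have hz1 : z * (1 / z) = 1 := by field_simp
    unfold profile
    generalize Real.exp (-(1 / z)) = E at *
    generalize Real.exp (-(1 / x)) = F at *
    linear_combination h' + E * hx1 - E * hz1

lemma profile_convexOn : ConvexOn ℝ (Set.Ioi 0) profile := by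
  refine ⟨convex_Ioi 0, fun x hx y hy α β hα hβ hαβ => ?_⟩
  obtain ⟨m, -, hm⟩ := profile_support (convex_Ioi (0 : ℝ) hx hy hα hβ hαβ)
  have h1 := mul_le_mul_of_nonneg_left (hm x hx) hα
  have h2 := mul_le_mul_of_nonneg_left (hm y hy) hβ
  simp only [smul_eq_mul] at *
  obtain rfl : β = 1 - α := by linarith
  linear_combination h1 + h2

lemma profile_antitoneOn : AntitoneOn profile (Set.Ioi 0) := by
  intro x hx y hy hxy
  obtain ⟨m, hm0, hm⟩ := profile_support hy
  nlinarith [hm x hx]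

/-- Appendix B: for every `n : ℕ`, the acceptance probability
`ψ_I(p) = 1 − ψ(p)ⁿ` is concave and nondecreasing on `(ε, ∞)`. -/
theorem acceptance_probability_concave_monotone
    (a c ε : ℝ) (ha : 0 < a) (hc : 0 < c)
    (ψ : ℝ → ℝ)
    (hψ : ∀ p : ℝ, ψ p =
      1 - (c * (p - ε) / a) * (1 - Real.exp (-a / (c * (p - ε))))) :
    ∀ n : ℕ,
      ConcaveOn ℝ (Set.Ioi ε) (fun p : ℝ => 1 - ψ p ^ n) ∧
      MonotoneOn (fun p : ℝ => 1 - ψ p ^ n) (Set.Ioi ε) := by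
  intro n
  have hψg : ∀ p, ψ p = profile (c * (p - ε) / a) := fun p => by
    rw [hψ, profile, one_div_div, neg_div]
  have hpos : ∀ p ∈ Set.Ioi ε, 0 < c * (p - ε) / a := fun p hp =>
    div_pos (mul_pos hc (sub_pos.2 hp)) ha
  have h0 : ∀ ⦃p⦄, p ∈ Set.Ioi ε → 0 ≤ ψ p := fun p hp => by
    rw [hψg]; exact profile_nonneg (hpos p hp)
  have hconv : ConvexOn ℝ (Set.Ioi ε) ψ := by
    refine ⟨convex_Ioi ε, fun x hx y hy α β hα hβ hαβ => ?_⟩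
    have h := profile_convexOn.2 (hpos x hx) (hpos y hy) hα hβ hαβ
    rw [hψg, hψg, hψg]
    convert h using 2
    simp only [smul_eq_mul]
    obtain rfl : β = 1 - α := by linarith
    ring
  constructor
  · exact (concaveOn_const 1 (convex_Ioi ε)).sub (hconv.pow h0 n)
  · intro x hx y hy hxy
    have h : ψ y ≤ ψ x := by
      rw [hψg, hψg]
      exact profile_antitoneOn (hpos x hx) (hpos y hy) (by gcongr)
    exact sub_le_sub_left (pow_le_pow_left₀ (h0 hy) h n) 1
end

section
/- Let a > 0, c > 0, ε ∈ ℝ, K ∈ ℝ with ε < K, B ∈ ℝ, and define ψ(π) = 1 − (c(π−ε)/a)(1 − e^{−a/(c(π−ε))}) for π > ε. Then for every natural number n, the function π ↦ (1 − ψ(π)^n)(π − K) + B is convex on the interval (ε, K]. -/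
/-!
In the rescaled price `x = c (p - ε) / a`, the rejection probability is
`φ x = 1 - x (1 - exp (-1/x))`. Since `x exp (-1/x)` is the perspective of the convex function
`y ↦ exp (-y)`, `φ` is convex on `(0, ∞)`; the chord of `exp (-·)` from `0` shows that `φ` is
antitone, and `1 - y ≤ exp (-y)` that it is nonnegative. Hence `ψ ^ n` is convex and antitone, so
`1 - ψ ^ n` is nonnegative, concave and monotone, while `K - p` is nonnegative, affine and
antitone. The product of two nonnegative concave functions varying in opposite directions is
concave, and the cost is `B` minus this product.
-/

/-- The rejection probability in the rescaled price `x = c (p - ε) / a`. -/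
noncomputable def rejectProb (x : ℝ) : ℝ := 1 - x * (1 - Real.exp (-1 / x))

theorem rejectProb_nonneg {x : ℝ} (hx : 0 < x) : 0 ≤ rejectProb x := by
  have h := Real.add_one_le_exp (-1 / x)
  have h2 : x * (-1 / x + 1) ≤ x * Real.exp (-1 / x) := mul_le_mul_of_nonneg_left h hx.le
  have h3 : x * (-1 / x + 1) = x - 1 := by field_simp; ring
  unfold rejectProb
  linarith

theorem rejectProb_le_one {x : ℝ} (hx : 0 < x) : rejectProb x ≤ 1 := by
  have h : Real.exp (-1 / x) ≤ 1 :=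
    Real.exp_le_one_iff.2 (div_nonpos_of_nonpos_of_nonneg (by norm_num) hx.le)
  have := mul_nonneg hx.le (sub_nonneg.2 h)
  unfold rejectProb
  linarith

theorem rejectProb_antitoneOn : AntitoneOn rejectProb (Set.Ioi 0) := by
  intro x (hx : 0 < x) y (hy : 0 < y) hxy
  -- `-1/y` lies on the segment from `0` to `-1/x`, with weight `x/y` at `-1/x`.
  have h := convexOn_exp.2 (Set.mem_univ (-1 / x)) (Set.mem_univ 0)
    (div_nonneg hx.le hy.le) (sub_nonneg.2 ((div_le_one hy).2 hxy)) (add_sub_cancel (x / y) 1)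
  simp only [smul_eq_mul, mul_zero, add_zero, Real.exp_zero, mul_one] at h
  have e : x / y * (-1 / x) = -1 / y := by field_simp
  rw [e] at h
  have h2 := mul_le_mul_of_nonneg_left h hy.le
  have h3 : y * (x / y * Real.exp (-1 / x) + (1 - x / y)) = x * Real.exp (-1 / x) + (y - x) := by
    field_simp
  unfold rejectProb
  linarith

theorem rejectProb_convexOn : ConvexOn ℝ (Set.Ioi 0) rejectProb := by
  refine ⟨convex_Ioi 0, ?_⟩
  intro x (hx : 0 < x) y (hy : 0 < y) s t hs ht hst
  have hz : 0 < s * x + t * y := convex_Ioi (0 : ℝ) hx hy hs ht hst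
  simp only [smul_eq_mul, rejectProb]
  set z := s * x + t * y with hzdef
  -- Perspective argument: `-1/z` is the average of `-1/x`, `-1/y` with weights `s x/z`, `t y/z`.
  have h := convexOn_exp.2 (Set.mem_univ (-1 / x)) (Set.mem_univ (-1 / y))
    (div_nonneg (mul_nonneg hs hx.le) hz.le) (div_nonneg (mul_nonneg ht hy.le) hz.le)
    (by rw [← add_div, ← hzdef, div_self hz.ne'])
  simp only [smul_eq_mul] at h
  have e : s * x / z * (-1 / x) + t * y / z * (-1 / y) = -1 / z := by
    field_simp
    linarith
  rw [e] at h
  have h2 := mul_le_mul_of_nonneg_left h hz.le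
  have h3 : z * (s * x / z * Real.exp (-1 / x) + t * y / z * Real.exp (-1 / y))
      = s * x * Real.exp (-1 / x) + t * y * Real.exp (-1 / y) := by
    field_simp
  rw [h3] at h2
  linarith

/-- Per-term convexity used in Proposition 4.1: for every `n : ℕ`, the
conditional expected cost `(1 − ψ(p)ⁿ)(p − K) + B` is convex on `(ε, K]`. -/
theorem conditional_expected_cost_convex
    (a c ε K B : ℝ) (ha : 0 < a) (hc : 0 < c) (hεK : ε < K)
    (ψ : ℝ → ℝ)
    (hψ : ∀ p : ℝ, ψ p =
      1 - (c * (p - ε) / a) * (1 - Real.exp (-a / (c * (p - ε))))) :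
    ∀ n : ℕ,
      ConvexOn ℝ (Set.Ioc ε K) (fun p : ℝ => (1 - ψ p ^ n) * (p - K) + B) := by
  intro n
  have hψ' : ∀ p, ψ p = rejectProb (c * (p - ε) / a) := by
    intro p
    rw [hψ, rejectProb]
    congr 4
    rw [div_div_eq_mul_div, neg_one_mul]
  have hpos : ∀ p ∈ Set.Ioc ε K, 0 < c * (p - ε) / a := fun p hp =>
    div_pos (mul_pos hc (sub_pos.2 hp.1)) ha
  have h0 : ∀ p ∈ Set.Ioc ε K, 0 ≤ ψ p := fun p hp => by
    rw [hψ']; exact rejectProb_nonneg (hpos p hp)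
  have h1 : ∀ p ∈ Set.Ioc ε K, ψ p ≤ 1 := fun p hp => by
    rw [hψ']; exact rejectProb_le_one (hpos p hp)
  have hanti : AntitoneOn ψ (Set.Ioc ε K) := by
    intro p hp q hq hpq
    rw [hψ', hψ']
    exact rejectProb_antitoneOn (hpos p hp) (hpos q hq) (by gcongr)
  have hconv : ConvexOn ℝ (Set.Ioc ε K) ψ := by
    refine ⟨convex_Ioc ε K, ?_⟩
    intro p hp q hq s t hs ht hst
    have h := rejectProb_convexOn.2 (hpos p hp) (hpos q hq) hs ht hst
    rw [hψ', hψ', hψ']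
    convert h using 2
    simp only [smul_eq_mul]
    field_simp
    linear_combination ε * hst
  have hq : ConcaveOn ℝ (Set.Ioc ε K) (fun p => 1 - ψ p ^ n) :=
    (concaveOn_const 1 (convex_Ioc ε K)).sub (hconv.pow (fun p hp => h0 p hp) n)
  have hl : ConcaveOn ℝ (Set.Ioc ε K) (fun p => K - p) :=
    (concaveOn_const K (convex_Ioc ε K)).sub (convexOn_id (convex_Ioc ε K))
  have hmono : MonotoneOn (fun p => 1 - ψ p ^ n) (Set.Ioc ε K) := fun p hp q hq hpq =>
    sub_le_sub_left (pow_le_pow_left₀ (h0 q hq) (hanti hp hq hpq) n) 1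
  have hlanti : AntitoneOn (fun p => K - p) (Set.Ioc ε K) := fun p _ q _ hpq =>
    sub_le_sub_left hpq K
  have hprod := hq.mul hl (fun p hp => sub_nonneg.2 (pow_le_one₀ (h0 p hp) (h1 p hp)))
    (fun p hp => sub_nonneg.2 hp.2) (hmono.antivaryOn hlanti)
  refine (hprod.neg.add_const B).congr fun p _ => ?_
  simp only [Pi.add_apply, Pi.neg_apply, Pi.mul_apply]
  ring
end

section
/- Let a > 0, c > 0, ε ∈ ℝ, K ∈ ℝ with ε < K, B ∈ ℝ, μ > 0, and define ψ(π) = 1 − (c(π−ε)/a)(1 − e^{−a/(c(π−ε))}) for π > ε, and Poisson weights p_n = μⁿ e^{−μ}/n! for n ∈ ℕ. Then the expected-cost function F(π) = Σ_{n=0}^∞ p_n [(1 − ψ(π)ⁿ)(π − K) + B] is well defined (the series converges) and convex on the interval (ε, K]. -/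
/-!
Write `q = 1 - ψ`. The Poisson generating function gives
`F p = B - (K - p) * (1 - exp (-μ q p))`. With `x = c (p - ε) / a` one has
`q = x (1 - exp (-1/x))`, the perspective of the concave function `t ↦ 1 - exp (-t)`, which
vanishes at `0`; hence `q` is nonnegative, increasing and concave, and so is `1 - exp (-μ q)`.
Its product with the nonnegative decreasing affine function `K - p` is concave
(`ConcaveOn.mul`), because the two factors are monotone in opposite directions.
-/

/-- The perspective inequality for the convex function `t ↦ exp (-t)`: the map
`x ↦ x * exp (-1/x)` is convex on the positive reals. -/
lemma perspective_exp_le {x y s t : ℝ} (hx : 0 < x) (hy : 0 < y) (hs : 0 ≤ s) (ht : 0 ≤ t)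
    (hst : s + t = 1) :
    (s * x + t * y) * Real.exp (-(s * x + t * y)⁻¹)
      ≤ s * (x * Real.exp (-x⁻¹)) + t * (y * Real.exp (-y⁻¹)) := by
  have hz : 0 < s * x + t * y := by
    rcases hs.eq_or_lt with rfl | h
    · have : t = 1 := by linarith
      subst this; simpa using hy
    · have := mul_pos h hx
      have := mul_nonneg ht hy.le
      linarith
  set z := s * x + t * y with hzdef
  -- `-1/z` is the convex combination of `-1/x` and `-1/y` with weights `s x / z` and `t y / z`.
  have key := convexOn_exp.2 (Set.mem_univ (-x⁻¹)) (Set.mem_univ (-y⁻¹))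
    (show 0 ≤ s * x / z by positivity) (show 0 ≤ t * y / z by positivity)
    (by rw [← add_div, ← hzdef, div_self hz.ne'])
  have e : (s * x / z) • (-x⁻¹) + (t * y / z) • (-y⁻¹) = -z⁻¹ := by
    simp only [smul_eq_mul]
    field_simp
    linarith
  rw [e] at key
  simp only [smul_eq_mul] at key
  calc z * Real.exp (-z⁻¹)
      ≤ z * (s * x / z * Real.exp (-x⁻¹) + t * y / z * Real.exp (-y⁻¹)) :=
        mul_le_mul_of_nonneg_left key hz.le
    _ = _ := by field_simp

/-- Monotonicity of `x ↦ x * (1 - exp (-1/x))`: a chord of the concave function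
`t ↦ 1 - exp (-t)` from the origin has decreasing slope in `t = 1/x`. -/
lemma mul_one_sub_exp_mono {x y : ℝ} (hx : 0 < x) (hxy : x ≤ y) :
    x * (1 - Real.exp (-x⁻¹)) ≤ y * (1 - Real.exp (-y⁻¹)) := by
  have hy : 0 < y := hx.trans_le hxy
  have key := convexOn_exp.2 (Set.mem_univ (-x⁻¹)) (Set.mem_univ 0)
    (show 0 ≤ x / y by positivity)
    (show 0 ≤ 1 - x / y by rw [sub_nonneg, div_le_one hy]; exact hxy) (by ring)
  have e : (x / y) • (-x⁻¹) + (1 - x / y) • (0 : ℝ) = -y⁻¹ := by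
    simp only [smul_eq_mul]
    field_simp
    ring
  rw [e] at key
  simp only [smul_eq_mul, Real.exp_zero] at key
  have := mul_le_mul_of_nonneg_left key hy.le
  have e2 : y * (x / y * Real.exp (-x⁻¹) + (1 - x / y) * 1) = x * Real.exp (-x⁻¹) + (y - x) := by
    field_simp
  rw [e2] at this
  linarith

/-- The Poisson probability generating function, in the form needed for the expected cost. -/
lemma poisson_hasSum (μ w k B : ℝ) :
    HasSum (fun n : ℕ => μ ^ n * Real.exp (-μ) / n.factorial * ((1 - w ^ n) * k + B))
      ((1 - Real.exp (-(μ * (1 - w)))) * k + B) := by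
  have hexp (u : ℝ) : HasSum (fun n : ℕ => u ^ n / n.factorial) (Real.exp u) := by
    rw [Real.exp_eq_exp_ℝ]
    exact NormedSpace.expSeries_div_hasSum_exp u
  have h := ((hexp μ).mul_left (Real.exp (-μ) * (k + B))).sub
    ((hexp (μ * w)).mul_left (Real.exp (-μ) * k))
  have h1 : Real.exp (-μ) * Real.exp μ = 1 := by rw [← Real.exp_add]; simp
  have h2 : Real.exp (-(μ * (1 - w))) = Real.exp (-μ) * Real.exp (μ * w) := by
    rw [← Real.exp_add]; congr 1; ring
  have hval : (1 - Real.exp (-(μ * (1 - w)))) * k + B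
      = Real.exp (-μ) * (k + B) * Real.exp μ - Real.exp (-μ) * k * Real.exp (μ * w) := by
    rw [h2]
    linear_combination (-(k + B)) * h1
  rw [hval]
  have hterm : (fun n : ℕ => μ ^ n * Real.exp (-μ) / n.factorial * ((1 - w ^ n) * k + B))
      = fun n : ℕ => Real.exp (-μ) * (k + B) * (μ ^ n / n.factorial)
        - Real.exp (-μ) * k * ((μ * w) ^ n / n.factorial) := by
    funext n
    rw [mul_pow]
    ring
  rw [hterm]
  exact h

/-- Proposition 4.1 (marginal convexity in the price): with Poisson weights
`pₙ = μⁿ e^{−μ}/n!`, the expected cost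
`F(p) = Σₙ pₙ[(1 − ψ(p)ⁿ)(p − K) + B]` is well defined (the series converges)
and convex on `(ε, K]`. -/
theorem expected_cost_summable_and_convex
    (a c ε K B μ : ℝ) (ha : 0 < a) (hc : 0 < c) (hεK : ε < K) (hμ : 0 < μ)
    (ψ : ℝ → ℝ)
    (hψ : ∀ p : ℝ, ψ p =
      1 - (c * (p - ε) / a) * (1 - Real.exp (-a / (c * (p - ε)))))
    (pn : ℕ → ℝ) (hpn : ∀ n : ℕ, pn n = μ ^ n * Real.exp (-μ) / n.factorial)
    (F : ℝ → ℝ)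
    (hF : ∀ p : ℝ, F p = ∑' n : ℕ, pn n * ((1 - ψ p ^ n) * (p - K) + B)) :
    (∀ p ∈ Set.Ioc ε K,
      Summable (fun n : ℕ => pn n * ((1 - ψ p ^ n) * (p - K) + B))) ∧
    ConvexOn ℝ (Set.Ioc ε K) F := by
  have hsum (p : ℝ) := poisson_hasSum μ (ψ p) (p - K) B
  simp only [← hpn] at hsum
  refine ⟨fun p _ => (hsum p).summable, ?_⟩
  set r : ℝ → ℝ := fun p => c * (p - ε) / a with hr
  set q : ℝ → ℝ := fun p => r p * (1 - Real.exp (-(r p)⁻¹)) with hq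
  have hψq (p : ℝ) : 1 - ψ p = q p := by
    rw [hψ]
    simp only [hq, hr, inv_div, neg_div]
    ring
  have hFq : F = fun p => B - (K - p) * (1 - Real.exp (-(μ * q p))) := by
    funext p
    rw [hF, (hsum p).tsum_eq, hψq]
    ring
  have hrpos {p : ℝ} (hp : p ∈ Set.Ioc ε K) : 0 < r p :=
    div_pos (mul_pos hc (sub_pos.2 hp.1)) ha
  have hqmono : MonotoneOn q (Set.Ioc ε K) := fun x hx y _ hxy =>
    mul_one_sub_exp_mono (hrpos hx) (by simp only [hr]; gcongr)
  have hqnn {p : ℝ} (hp : p ∈ Set.Ioc ε K) : 0 ≤ q p := by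
    have h : Real.exp (-(r p)⁻¹) ≤ 1 := by
      rw [Real.exp_le_one_iff, neg_nonpos]
      exact (inv_pos.2 (hrpos hp)).le
    exact mul_nonneg (hrpos hp).le (sub_nonneg.2 h)
  have hqconc : ConcaveOn ℝ (Set.Ioc ε K) q := by
    refine ⟨convex_Ioc ε K, fun x hx y hy s t hs ht hst => ?_⟩
    have h := perspective_exp_le (hrpos hx) (hrpos hy) hs ht hst
    have e : r (s • x + t • y) = s * r x + t * r y := by
      simp only [hr, smul_eq_mul]
      have : s = 1 - t := by linarith
      subst this
      field_simp
      ring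
    simp only [hq, e]
    simp only [smul_eq_mul]
    linarith
  have hgmono : MonotoneOn (fun p => 1 - Real.exp (-(μ * q p))) (Set.Ioc ε K) := by
    intro x hx y hy hxy
    have := hqmono hx hy hxy
    dsimp only
    gcongr
  have hgconc : ConcaveOn ℝ (Set.Ioc ε K) (fun p => 1 - Real.exp (-(μ * q p))) := by
    refine ⟨convex_Ioc ε K, fun x hx y hy s t hs ht hst => ?_⟩
    have h1 := hqconc.2 hx hy hs ht hst
    have h2 := convexOn_exp.2 (Set.mem_univ (-(μ * q x))) (Set.mem_univ (-(μ * q y))) hs ht hst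
    have h3 : Real.exp (-(μ * q (s • x + t • y)))
        ≤ Real.exp (s • (-(μ * q x)) + t • (-(μ * q y))) := by
      rw [Real.exp_le_exp]
      have := mul_le_mul_of_nonneg_left h1 hμ.le
      simp only [smul_eq_mul] at this ⊢
      linarith
    have h4 := h3.trans h2
    simp only [smul_eq_mul] at h4 ⊢
    linarith
  have hgnn : ∀ ⦃p⦄, p ∈ Set.Ioc ε K → 0 ≤ 1 - Real.exp (-(μ * q p)) := fun p hp => by
    rw [sub_nonneg, Real.exp_le_one_iff, neg_nonpos]
    exact mul_nonneg hμ.le (hqnn hp)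
  have hlin : ConcaveOn ℝ (Set.Ioc ε K) (fun p => K - p) :=
    (concaveOn_const K (convex_Ioc ε K)).sub (convexOn_id (convex_Ioc ε K))
  have hanti : AntitoneOn (fun p : ℝ => K - p) (Set.Ioc ε K) :=
    fun x _ y _ hxy => sub_le_sub_left hxy K
  have hprod := hlin.mul hgconc (fun p hp => sub_nonneg.2 hp.2) hgnn
    (hanti.antivaryOn hgmono)
  rw [hFq]
  exact (convexOn_const B (convex_Ioc ε K)).sub hprod
end

section
/- Let a > 0, c > 0, π ∈ ℝ, K ∈ ℝ with π ≤ K, B ∈ ℝ, μ > 0, and p_n = μⁿ e^{−μ}/n!. For ε < π define q(ε) = φ_a(c(π−ε))/a with φ_a(w) = w(1 − e^{−a/w}), and define F̃(ε) = Σ_{n=0}^∞ p_n [(1 − (1 − q(ε))ⁿ)(π − K) + B]. Then F̃ is nondecreasing on (−∞, π): a larger reservation utility ε of the helping MTs yields a larger expected energy cost for the source MT. -/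
/-!
Averaging over the Poisson number of helpers collapses the series: since the probability generating
function of the Poisson law is `x ↦ e^{-μ} e^{μ x}`, the expected cost is
`(1 - e^{-μ q}) (pr - K) + B`, which is nonincreasing in `q` because `pr ≤ K`
(`hasSum_poisson_cost`). It remains to see that `q` is nonincreasing in the reservation utility,
i.e. that `w ↦ w (1 - e^{-a/w})` is nondecreasing on `(0, ∞)`; this follows from convexity of `exp`
(`phi_mono`).
-/

/-- The function `φ_a(w) = w (1 - e^{-a/w})` is nondecreasing on `(0, ∞)`, for every real `a`. -/
lemma phi_mono (a : ℝ) {v w : ℝ} (hv : 0 < v) (hvw : v ≤ w) :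
    v * (1 - Real.exp (-a / v)) ≤ w * (1 - Real.exp (-a / w)) := by
  have hw : 0 < w := hv.trans_le hvw
  -- `-a/w` is the convex combination of `-a/v` and `0` with weights `v/w` and `1 - v/w`.
  have h := convexOn_exp.2 (Set.mem_univ (-a / v)) (Set.mem_univ (0 : ℝ))
    (div_nonneg hv.le hw.le) (sub_nonneg.2 ((div_le_one hw).2 hvw)) (add_sub_cancel (v / w) 1)
  have e : v / w * (-a / v) = -a / w := by field_simp
  simp only [smul_eq_mul, mul_zero, add_zero, Real.exp_zero, mul_one, e] at h
  have h2 := mul_le_mul_of_nonneg_left h hw.le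
  have e2 : w * (v / w * Real.exp (-a / v) + (1 - v / w))
      = v * Real.exp (-a / v) + (w - v) := by field_simp
  rw [e2] at h2
  linarith

/-- Closed form of the expected cost: an instance of the Poisson generating function, valid for
every real `q`, not only for probabilities. -/
lemma hasSum_poisson_cost (μ q D B : ℝ) :
    HasSum (fun n : ℕ => μ ^ n * Real.exp (-μ) / n.factorial * ((1 - (1 - q) ^ n) * D + B))
      ((1 - Real.exp (-(μ * q))) * D + B) := by
  have hexp (x : ℝ) : HasSum (fun n : ℕ => x ^ n / n.factorial) (Real.exp x) := by
    rw [Real.exp_eq_exp_ℝ]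
    exact NormedSpace.expSeries_div_hasSum_exp x
  have h := ((hexp μ).mul_right (Real.exp (-μ) * (D + B))).sub
    ((hexp (μ * (1 - q))).mul_right (Real.exp (-μ) * D))
  convert h using 1
  · rfl
  · funext n
    rw [mul_pow]
    ring
  · have e1 : Real.exp μ * Real.exp (-μ) = 1 := by rw [← Real.exp_add]; simp
    have e2 : Real.exp (μ * (1 - q)) * Real.exp (-μ) = Real.exp (-(μ * q)) := by
      rw [← Real.exp_add]
      congr 1
      ring
    rw [← mul_assoc, ← mul_assoc, e1, e2]
    ring

/-- Monotonicity of the expected energy cost in the reservation utility `ε`: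
with acceptance probability `q(e) = φₐ(c(pr − e))/a` and Poisson weights
`pₙ = μⁿ e^{−μ}/n!`, the expected cost
`F̃(e) = Σₙ pₙ[(1 − (1 − q(e))ⁿ)(pr − K) + B]` is nondecreasing on `(−∞, pr)`. -/
theorem expected_cost_monotone_in_reservation_utility
    (a c pr K B μ : ℝ) (ha : 0 < a) (hc : 0 < c) (hprK : pr ≤ K) (hμ : 0 < μ)
    (pn : ℕ → ℝ) (hpn : ∀ n : ℕ, pn n = μ ^ n * Real.exp (-μ) / n.factorial)
    (q : ℝ → ℝ)
    (hq : ∀ e : ℝ, q e =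
      (c * (pr - e)) * (1 - Real.exp (-a / (c * (pr - e)))) / a)
    (F : ℝ → ℝ)
    (hF : ∀ e : ℝ, F e = ∑' n : ℕ, pn n * ((1 - (1 - q e) ^ n) * (pr - K) + B)) :
    MonotoneOn F (Set.Iio pr) := by
  intro x hx y hy hxy
  have hval (e : ℝ) : F e = (1 - Real.exp (-(μ * q e))) * (pr - K) + B := by
    rw [hF]
    simp only [hpn]
    exact (hasSum_poisson_cost μ (q e) (pr - K) B).tsum_eq
  have hqyx : q y ≤ q x := by
    rw [hq, hq]
    exact div_le_div_of_nonneg_right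
      (phi_mono a (mul_pos hc (sub_pos.2 hy))
        (mul_le_mul_of_nonneg_left (sub_le_sub_left hxy pr) hc.le)) ha.le
  have hexp : Real.exp (-(μ * q x)) ≤ Real.exp (-(μ * q y)) :=
    Real.exp_le_exp.2 (neg_le_neg (mul_le_mul_of_nonneg_left hqyx hμ.le))
  rw [hval, hval]
  have := mul_le_mul_of_nonpos_right (sub_le_sub_left hexp 1) (sub_nonpos.2 hprK)
  linarith
end
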